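/- arXiv:1809.04146 — 2 statements merged into one kernel-verified Lean document; each statement's English description precedes it below -/
import Mathlib

section
/- Let each f_i : R^d → R be differentiable with L_i-Lipschitz gradient and f = (1/n) Σ_{i=1}^n f_i. Let S be a proper sampling over [n] with probability vector p, let v ∈ R^n satisfy the ESO condition for S, and set b = Σ_i p_i and K = (b/n²) Σ_{i=1}^n v_i L_i²/p_i. Then for any points x, y ∈ R^d, E‖ Σ_{i∈S} (∇f_i(x) − ∇f_i(y))/(n p_i) ‖² − ‖∇f(x) − ∇f(y)‖² ≤ (K/b)·‖x − y‖², where the expectation is over the random set S. -/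
/-!
Put `g i = ∇f i x - ∇f i y` and `a i = g i / (n p i)`. Expanding the squared norm, the second moment
of `∑ i ∈ S, a i` is the quadratic form of `P` at `a`, while `∑ p i a i = ∇F x - ∇F y`, so the
left-hand side is the quadratic form of `P - p pᵀ` at `a`. The ESO condition, applied to each
coordinate of the vectors `a i` (`sampling_variance_le_scalar`, summed in
`sampling_variance_le`), bounds it by `∑ p i v i ‖a i‖²`, and the Lipschitz bound
`‖g i‖ ≤ L i ‖x - y‖` concludes. The last step needs `v i ≥ 0`, which follows from the diagonal of
the ESO condition, `p i v i ≥ p i (1 - p i) ≥ 0` (`eso_weight_nonneg`).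
-/

open scoped BigOperators

section Sampling

variable {n : ℕ} {w : Finset (Fin n) → ℝ} {p v : Fin n → ℝ} {P : Matrix (Fin n) (Fin n) ℝ}

lemma sampling_variance_le_scalar
    (hP : ∀ i j, P i j =
      ∑ S ∈ Finset.univ.filter (fun S : Finset (Fin n) => i ∈ S ∧ j ∈ S), w S)
    (hESO : (Matrix.diagonal (fun i => p i * v i) -
      (P - Matrix.of fun i j => p i * p j)).PosSemidef) (c : Fin n → ℝ) :
    (∑ S, w S * (∑ i ∈ S, c i) ^ 2) - (∑ i, p i * c i) ^ 2 ≤ ∑ i, p i * v i * c i ^ 2 := by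
  have second_moment : ∑ S, w S * (∑ i ∈ S, c i) ^ 2 = ∑ i, ∑ j, P i j * (c i * c j) := by
    have expand : ∀ S : Finset (Fin n), w S * (∑ i ∈ S, c i) ^ 2 =
        ∑ i, ∑ j, (if i ∈ S ∧ j ∈ S then w S else 0) * (c i * c j) := by
      intro S
      have hS : ∑ i ∈ S, c i = ∑ i, if i ∈ S then c i else 0 := by simp
      rw [hS, sq, Finset.sum_mul_sum, Finset.mul_sum]
      refine Finset.sum_congr rfl fun i _ => ?_
      rw [Finset.mul_sum]
      refine Finset.sum_congr rfl fun j _ => ?_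
      by_cases hi : i ∈ S <;> by_cases hj : j ∈ S <;> simp [hi, hj]
    simp_rw [expand]
    rw [Finset.sum_comm]
    refine Finset.sum_congr rfl fun i _ => ?_
    rw [Finset.sum_comm]
    refine Finset.sum_congr rfl fun j _ => ?_
    rw [← Finset.sum_mul, hP, Finset.sum_filter]
  have mean_sq : (∑ i, p i * c i) ^ 2 = ∑ i, ∑ j, p i * p j * (c i * c j) := by
    rw [sq, Finset.sum_mul_sum]
    exact Finset.sum_congr rfl fun i _ => Finset.sum_congr rfl fun j _ => by ring
  have diag : ∑ i, p i * v i * c i ^ 2 =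
      ∑ i, ∑ j, Matrix.diagonal (fun i => p i * v i) i j * (c i * c j) := by
    refine Finset.sum_congr rfl fun i _ => ?_
    simp [Matrix.diagonal_apply, sq]
  have form_nonneg := hESO.dotProduct_mulVec_nonneg c
  have form_eq : star c ⬝ᵥ (Matrix.diagonal (fun i => p i * v i) -
      (P - Matrix.of fun i j => p i * p j)).mulVec c =
      ∑ i, ∑ j, Matrix.diagonal (fun i => p i * v i) i j * (c i * c j) -
      (∑ i, ∑ j, P i j * (c i * c j) - ∑ i, ∑ j, p i * p j * (c i * c j)) := by
    simp only [dotProduct, Matrix.mulVec, ← Finset.sum_sub_distrib, Finset.mul_sum]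
    refine Finset.sum_congr rfl fun i _ => Finset.sum_congr rfl fun j _ => ?_
    simp only [Pi.star_apply, star_trivial, Matrix.sub_apply, Matrix.of_apply]
    ring
  rw [second_moment, mean_sq, diag]
  linarith

lemma sampling_variance_le {d : ℕ}
    (hP : ∀ i j, P i j =
      ∑ S ∈ Finset.univ.filter (fun S : Finset (Fin n) => i ∈ S ∧ j ∈ S), w S)
    (hESO : (Matrix.diagonal (fun i => p i * v i) -
      (P - Matrix.of fun i j => p i * p j)).PosSemidef)
    (a : Fin n → EuclideanSpace ℝ (Fin d)) :
    (∑ S, w S * ‖∑ i ∈ S, a i‖ ^ 2) - ‖∑ i, p i • a i‖ ^ 2 ≤ ∑ i, p i * v i * ‖a i‖ ^ 2 := by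
  have coordinates := Finset.sum_le_sum fun (k : Fin d) (_ : k ∈ Finset.univ) =>
    sampling_variance_le_scalar hP hESO fun i => a i k
  rw [Finset.sum_sub_distrib, Finset.sum_comm,
    Finset.sum_comm (f := fun k i => p i * v i * a i k ^ 2)] at coordinates
  simpa [EuclideanSpace.real_norm_sq_eq, Finset.mul_sum] using coordinates

lemma eso_weight_nonneg
    (hw0 : ∀ S, 0 ≤ w S) (hw1 : ∑ S, w S = 1)
    (hp : ∀ i, p i = ∑ S ∈ Finset.univ.filter (fun S : Finset (Fin n) => i ∈ S), w S)
    (hproper : ∀ i, 0 < p i)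
    (hP : ∀ i j, P i j =
      ∑ S ∈ Finset.univ.filter (fun S : Finset (Fin n) => i ∈ S ∧ j ∈ S), w S)
    (hESO : (Matrix.diagonal (fun i => p i * v i) -
      (P - Matrix.of fun i j => p i * p j)).PosSemidef) (i : Fin n) : 0 ≤ v i := by
  have p_le_one : p i ≤ 1 := by
    rw [hp, ← hw1]
    exact Finset.sum_le_sum_of_subset_of_nonneg (Finset.filter_subset _ _) fun S _ _ => hw0 S
  have hPii : P i i = p i := by simp [hP, hp]
  have hdiag := hESO.diag_nonneg (i := i)
  simp only [Matrix.sub_apply, Matrix.diagonal_apply_eq, Matrix.of_apply, hPii] at hdiag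
  have hpi := hproper i
  refine le_of_mul_le_mul_left (a := p i) ?_ hpi
  nlinarith

end Sampling

/-- Variance bound for the SARAH-type gradient difference estimator under
arbitrary sampling: `E‖Σ_{i∈S} (∇f_i(x) - ∇f_i(y))/(n p_i)‖² - ‖∇f(x) - ∇f(y)‖²
≤ (K/b)‖x - y‖²`. -/
theorem sarah_gradient_difference_variance_bound {n d : ℕ}
    (f : Fin n → EuclideanSpace ℝ (Fin d) → ℝ)
    (L : Fin n → ℝ) (hL : ∀ i, 0 ≤ L i)
    (hdiff : ∀ i, Differentiable ℝ (f i))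
    (hlip : ∀ i x y, ‖gradient (f i) x - gradient (f i) y‖ ≤ L i * ‖x - y‖)
    (F : EuclideanSpace ℝ (Fin d) → ℝ)
    (hF : F = fun y => (n : ℝ)⁻¹ * ∑ i, f i y)
    (w : Finset (Fin n) → ℝ) (hw0 : ∀ S, 0 ≤ w S) (hw1 : ∑ S, w S = 1)
    (p : Fin n → ℝ)
    (hp : ∀ i, p i = ∑ S ∈ Finset.univ.filter (fun S : Finset (Fin n) => i ∈ S), w S)
    (hproper : ∀ i, 0 < p i)
    (P : Matrix (Fin n) (Fin n) ℝ)
    (hP : ∀ i j, P i j =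
      ∑ S ∈ Finset.univ.filter (fun S : Finset (Fin n) => i ∈ S ∧ j ∈ S), w S)
    (v : Fin n → ℝ)
    (hESO : (Matrix.diagonal (fun i => p i * v i) -
      (P - Matrix.of fun i j => p i * p j)).PosSemidef)
    (b K : ℝ) (hb : b = ∑ i, p i)
    (hK : K = b / (n : ℝ) ^ 2 * ∑ i, v i * L i ^ 2 / p i)
    (x y : EuclideanSpace ℝ (Fin d)) :
    (∑ S : Finset (Fin n), w S *
        ‖∑ i ∈ S, ((n : ℝ) * p i)⁻¹ • (gradient (f i) x - gradient (f i) y)‖ ^ 2) -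
      ‖gradient F x - gradient F y‖ ^ 2
      ≤ (K / b) * ‖x - y‖ ^ 2 := by
  have gradient_F : ∀ z, gradient F z = (n : ℝ)⁻¹ • ∑ i, gradient (f i) z := by
    intro z
    have hgrad : HasGradientAt F ((n : ℝ)⁻¹ • ∑ i, gradient (f i) z) z := by
      rw [hasGradientAt_iff_hasFDerivAt, hF]
      have hsum := (HasFDerivAt.fun_sum (u := Finset.univ) fun i _ =>
        ((hdiff i z).hasGradientAt).hasFDerivAt).const_mul (n : ℝ)⁻¹
      simpa [map_sum] using hsum
    exact hgrad.gradient
  have mean : gradient F x - gradient F y =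
      ∑ i, p i • ((n : ℝ) * p i)⁻¹ • (gradient (f i) x - gradient (f i) y) := by
    rw [gradient_F, gradient_F, ← smul_sub, ← Finset.sum_sub_distrib, Finset.smul_sum]
    refine Finset.sum_congr rfl fun i _ => ?_
    have hpi := (hproper i).ne'
    rw [smul_smul, mul_inv, mul_comm (n : ℝ)⁻¹, mul_inv_cancel_left₀ hpi]
  rw [mean]
  refine (sampling_variance_le hP hESO _).trans ?_
  -- If `b = 0` then properness forces `n = 0`, and both sides vanish.
  have hKb : K / b = ∑ i, v i * L i ^ 2 / ((n : ℝ) ^ 2 * p i) := by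
    rcases Nat.eq_zero_or_pos n with rfl | hn
    · simp [hb]
    · have : Nonempty (Fin n) := ⟨⟨0, hn⟩⟩
      have hb0 : b ≠ 0 := by
        rw [hb]
        exact (Finset.sum_pos (fun i _ => hproper i) Finset.univ_nonempty).ne'
      rw [hK, mul_comm, mul_div_assoc, div_right_comm, div_self hb0, Finset.sum_mul]
      refine Finset.sum_congr rfl fun i _ => ?_
      rw [div_mul_div_comm, mul_one, mul_comm (p i)]
  rw [hKb, Finset.sum_mul]
  refine Finset.sum_le_sum fun i _ => ?_
  have hpi := hproper i
  have hvi := eso_weight_nonneg hw0 hw1 hp hproper hP hESO i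
  have hn0 : (n : ℝ) ≠ 0 := Nat.cast_ne_zero.mpr (Fin.pos i).ne'
  have hsq : ‖gradient (f i) x - gradient (f i) y‖ ^ 2 ≤ (L i * ‖x - y‖) ^ 2 :=
    pow_le_pow_left₀ (norm_nonneg _) (hlip i x y) 2
  calc p i * v i * ‖((n : ℝ) * p i)⁻¹ • (gradient (f i) x - gradient (f i) y)‖ ^ 2
      = v i / ((n : ℝ) ^ 2 * p i) * ‖gradient (f i) x - gradient (f i) y‖ ^ 2 := by
        rw [norm_smul, mul_pow, Real.norm_eq_abs, sq_abs]
        field_simp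
    _ ≤ v i / ((n : ℝ) ^ 2 * p i) * (L i * ‖x - y‖) ^ 2 := by gcongr
    _ = v i * L i ^ 2 / ((n : ℝ) ^ 2 * p i) * ‖x - y‖ ^ 2 := by ring
end

section
/- Let each f_i : R^d → R be differentiable, f = (1/n) Σ_{i=1}^n f_i, and let S be a proper sampling over [n] with probability vector p. Fix points x, x' ∈ R^d and a vector u ∈ R^d, and define the SARAH update u' := Σ_{i∈S} (∇f_i(x') − ∇f_i(x))/(n p_i) + u. Then the following exact identity holds: E‖∇f(x') − u'‖² = ‖∇f(x) − u‖² − ‖∇f(x') − ∇f(x)‖² + E‖u' − u‖², where the expectation is over the random set S. -/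
/-!
Write `Δ S` for the importance-weighted sum of the gradient differences over `S`, so that
`u' = Δ S + u`. Linearity of the gradient (`gradient_average`) and unbiasedness of the weighting
(`sum_weight_smul_importance`) give `E[Δ] = ∇F x' - ∇F x`. With `a = ∇F x' - u`, expanding squares
gives `E‖a - Δ‖² = ‖a‖² - 2⟪a, E[Δ]⟫ + E‖Δ‖² = ‖a - E[Δ]‖² - ‖E[Δ]‖² + E‖Δ‖²`
(`sum_weight_mul_norm_sub_sq`), and `a - E[Δ] = ∇F x - u`.
-/

open scoped BigOperators

theorem gradient_average {E : Type*} [NormedAddCommGroup E] [InnerProductSpace ℝ E]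
    [CompleteSpace E] {n : ℕ} (f : Fin n → E → ℝ) (hdiff : ∀ i, Differentiable ℝ (f i)) (y : E) :
    gradient (fun y => (n : ℝ)⁻¹ * ∑ i, f i y) y = (n : ℝ)⁻¹ • ∑ i, gradient (f i) y := by
  have h : HasFDerivAt (fun y => (n : ℝ)⁻¹ * ∑ i, f i y)
      ((n : ℝ)⁻¹ • ∑ i, fderiv ℝ (f i) y) y :=
    (HasFDerivAt.fun_sum fun i _ => (hdiff i y).hasFDerivAt).const_mul _
  simp only [gradient, h.fderiv, map_smulₛₗ, map_sum]
  simp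

/-- Unbiasedness of the importance-weighted estimator. For `n = 0` both sides are `0`. -/
theorem sum_weight_smul_importance {E : Type*} [AddCommGroup E] [Module ℝ E] {n : ℕ}
    (w : Finset (Fin n) → ℝ) (p : Fin n → ℝ)
    (hp : ∀ i, p i = ∑ S ∈ Finset.univ.filter (fun S : Finset (Fin n) => i ∈ S), w S)
    (hproper : ∀ i, 0 < p i) (v : Fin n → E) :
    ∑ S, w S • ∑ i ∈ S, ((n : ℝ) * p i)⁻¹ • v i = (n : ℝ)⁻¹ • ∑ i, v i := by
  simp only [Finset.smul_sum]
  rw [Finset.sum_comm' (t' := Finset.univ)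
    (s' := fun i => Finset.univ.filter (fun S : Finset (Fin n) => i ∈ S)) (by simp)]
  refine Finset.sum_congr rfl fun i _ => ?_
  rw [← Finset.sum_smul, ← hp, smul_smul, mul_inv, mul_left_comm,
    mul_inv_cancel₀ (hproper i).ne', mul_one]

theorem sum_weight_mul_norm_sub_sq {E ι : Type*} [NormedAddCommGroup E] [InnerProductSpace ℝ E]
    [Fintype ι] (w : ι → ℝ) (hw1 : ∑ s, w s = 1) (X : ι → E) (m a : E)
    (hm : ∑ s, w s • X s = m) :
    ∑ s, w s * ‖a - X s‖ ^ 2 = ‖a - m‖ ^ 2 - ‖m‖ ^ 2 + ∑ s, w s * ‖X s‖ ^ 2 := by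
  have hin : ∑ s, w s * inner ℝ a (X s) = inner ℝ a m := by
    rw [← hm, inner_sum]
    simp only [inner_smul_right]
  calc ∑ s, w s * ‖a - X s‖ ^ 2
      = ∑ s, (w s * ‖a‖ ^ 2 - 2 * (w s * inner ℝ a (X s)) + w s * ‖X s‖ ^ 2) := by
        refine Finset.sum_congr rfl fun s _ => ?_
        rw [norm_sub_sq_real]
        ring
    _ = ‖a‖ ^ 2 - 2 * inner ℝ a m + ∑ s, w s * ‖X s‖ ^ 2 := by
        rw [Finset.sum_add_distrib, Finset.sum_sub_distrib, ← Finset.sum_mul, ← Finset.mul_sum,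
          hw1, hin, one_mul]
    _ = _ := by
        rw [norm_sub_sq_real a m]
        ring

/-- Exact recursion identity for the SARAH estimator under arbitrary proper
sampling: `E‖∇f(x') - u'‖² = ‖∇f(x) - u‖² - ‖∇f(x') - ∇f(x)‖² + E‖u' - u‖²`. -/
theorem sarah_update_exact_identity {n d : ℕ}
    (f : Fin n → EuclideanSpace ℝ (Fin d) → ℝ)
    (hdiff : ∀ i, Differentiable ℝ (f i))
    (F : EuclideanSpace ℝ (Fin d) → ℝ)
    (hF : F = fun y => (n : ℝ)⁻¹ * ∑ i, f i y)
    (w : Finset (Fin n) → ℝ) (hw0 : ∀ S, 0 ≤ w S) (hw1 : ∑ S, w S = 1)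
    (p : Fin n → ℝ)
    (hp : ∀ i, p i = ∑ S ∈ Finset.univ.filter (fun S : Finset (Fin n) => i ∈ S), w S)
    (hproper : ∀ i, 0 < p i)
    (x x' u : EuclideanSpace ℝ (Fin d)) :
    ∑ S : Finset (Fin n), w S *
        ‖gradient F x' -
          ((∑ i ∈ S, ((n : ℝ) * p i)⁻¹ • (gradient (f i) x' - gradient (f i) x)) + u)‖ ^ 2
      = ‖gradient F x - u‖ ^ 2 - ‖gradient F x' - gradient F x‖ ^ 2 +
        ∑ S : Finset (Fin n), w S *
          ‖((∑ i ∈ S, ((n : ℝ) * p i)⁻¹ • (gradient (f i) x' - gradient (f i) x)) + u)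
            - u‖ ^ 2 := by
  have hm : ∑ S, w S • ∑ i ∈ S, ((n : ℝ) * p i)⁻¹ • (gradient (f i) x' - gradient (f i) x)
      = gradient F x' - gradient F x := by
    rw [sum_weight_smul_importance w p hp hproper, hF, gradient_average f hdiff,
      gradient_average f hdiff, Finset.sum_sub_distrib, smul_sub]
  have key := sum_weight_mul_norm_sub_sq w hw1 _ _ (gradient F x' - u) hm
  have hbias : gradient F x' - u - (gradient F x' - gradient F x) = gradient F x - u := by abel
  rw [hbias] at key
  simpa only [add_sub_cancel_right, sub_sub, add_comm u] using key
end
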